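/- arXiv:1707.02782 — 5 statements merged into one kernel-verified Lean document; each statement's English description precedes it below -/
import Mathlib

section
/- For every real α > −1 and all integers j, l ≥ 1 with |j − l| > 2, the integrated Jacobi polynomials satisfy ∫_{−1}^{1} (1−x)^α p̂_j^α(x) p̂_l^α(x) dx = 0. -/
open MeasureTheory

/-- Jacobi polynomial with parameters `(α, 0)`, via the Rodrigues formula. -/
noncomputable def jacobiP (α : ℝ) (n : ℕ) (x : ℝ) : ℝ :=
  1 / (2 ^ n * (n.factorial : ℝ) * (1 - x) ^ α) *
    iteratedDeriv n (fun t : ℝ => (1 - t) ^ α * (t ^ 2 - 1) ^ n) x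

/-- Integrated Jacobi polynomial `p̂_n^α`. -/
noncomputable def jacobiPhat (α : ℝ) (n : ℕ) (x : ℝ) : ℝ :=
  if n = 0 then 1 else ∫ ξ in (-1 : ℝ)..x, jacobiP α (n - 1) ξ

open Polynomial in
noncomputable def jacS (α : ℝ) (n : ℕ) : ℕ → Polynomial ℝ
  | 0 => C ((-1) ^ n)
  | k + 1 => C (-(α + n - k)) * (1 + X) * jacS α n k + C ((n : ℝ) - k) * (1 - X) * jacS α n k
      + (1 - X) * (1 + X) * derivative (jacS α n k)

open Polynomial in
lemma jacS_natDegree (α : ℝ) (n k : ℕ) : (jacS α n k).natDegree ≤ k := by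
  induction k with
  | zero => simp [jacS]
  | succ k ih =>
    have hd : (1 - X : ℝ[X]).natDegree ≤ 1 := by compute_degree
    have hd' : (1 + X : ℝ[X]).natDegree ≤ 1 := by compute_degree
    rw [jacS]
    refine natDegree_add_le_of_degree_le (natDegree_add_le_of_degree_le ?_ ?_) ?_
    · rw [mul_assoc]
      refine (natDegree_C_mul_le _ _).trans ?_
      refine natDegree_mul_le.trans (by omega)
    · rw [mul_assoc]
      refine (natDegree_C_mul_le _ _).trans ?_
      refine natDegree_mul_le.trans (by omega)
    · by_cases h0 : (jacS α n k).natDegree = 0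
      · rw [natDegree_eq_zero] at h0
        obtain ⟨c, hc⟩ := h0
        simp [← hc]
      · have h1 := natDegree_derivative_lt h0
        have h2 : ((1 - X) * (1 + X) : ℝ[X]).natDegree ≤ 2 :=
          natDegree_mul_le.trans (by omega)
        refine natDegree_mul_le.trans (by omega)

noncomputable def jacF (α : ℝ) (n k : ℕ) (t : ℝ) : ℝ :=
  (1 - t) ^ (α + n - k) * (1 + t) ^ (n - k) * (jacS α n k).eval t

lemma hasDerivAt_w (a : ℝ) {t : ℝ} (ht : t < 1) :
    HasDerivAt (fun x : ℝ => (1 - x) ^ a) (-a * (1 - t) ^ (a - 1)) t := by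
  have h := ((hasDerivAt_id t).const_sub 1).rpow_const (p := a) (Or.inl (by simp; linarith))
  refine h.congr_deriv ?_
  simp

lemma w_split (a : ℝ) {t : ℝ} (ht : t < 1) : (1 - t) ^ a = (1 - t) ^ (a - 1) * (1 - t) := by
  have h : (0 : ℝ) < 1 - t := by linarith
  rw [Real.rpow_sub_one h.ne']
  field_simp

lemma jacF_deriv (α : ℝ) (n k : ℕ) (hk : k < n) {t : ℝ} (ht : t < 1) :
    HasDerivAt (jacF α n k) (jacF α n (k + 1) t) t := by
  obtain ⟨m, rfl⟩ := Nat.exists_eq_add_of_lt hk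
  have h1 := hasDerivAt_w (α + (k + m + 1 : ℕ) - k) ht
  have h2 : HasDerivAt (fun x : ℝ => (1 + x) ^ (k + m + 1 - k)) ((m + 1 : ℝ) * (1 + t) ^ m) t := by
    have : k + m + 1 - k = m + 1 := by omega
    rw [this]
    have := ((hasDerivAt_id t).const_add 1).pow (m + 1)
    refine this.congr_deriv ?_
    simp
  have h3 := (jacS α (k + m + 1) k).hasDerivAt t
  refine ((h1.mul h2).mul h3).congr_deriv ?_
  have e1 : k + m + 1 - k = m + 1 := by omega
  have e2 : k + m + 1 - (k + 1) = m := by omega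
  have e3 : α + ((k + m + 1 : ℕ) : ℝ) - ((k + 1 : ℕ) : ℝ) = α + (k + m + 1 : ℕ) - k - 1 := by
    push_cast; ring
  simp only [jacF, jacS, e1, e2, e3, Pi.mul_apply]
  rw [w_split (α + (k + m + 1 : ℕ) - k) ht]
  simp
  ring

lemma iter_eq (α : ℝ) (n k : ℕ) (hk : k ≤ n) {t : ℝ} (ht : t < 1) :
    iteratedDeriv k (fun t : ℝ => (1 - t) ^ α * (t ^ 2 - 1) ^ n) t = jacF α n k t := by
  induction k generalizing t with
  | zero =>
    have h : (0 : ℝ) < 1 - t := by linarith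
    simp only [iteratedDeriv_zero, jacF, jacS, Nat.cast_zero, sub_zero, Nat.sub_zero,
      Polynomial.eval_C]
    rw [Real.rpow_add h, Real.rpow_natCast]
    have : t ^ 2 - 1 = (1 - t) * (1 + t) * (-1) := by ring
    rw [this, mul_pow, mul_pow]
    ring
  | succ k ih =>
    rw [iteratedDeriv_succ]
    have : iteratedDeriv k (fun t : ℝ => (1 - t) ^ α * (t ^ 2 - 1) ^ n) =ᶠ[nhds t]
        jacF α n k := by
      filter_upwards [Iio_mem_nhds ht] with s hs
      exact ih (by omega) hs
    rw [this.deriv_eq]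
    exact (jacF_deriv α n k (by omega) ht).deriv

open Polynomial in
noncomputable def jacPoly (α : ℝ) (n : ℕ) : Polynomial ℝ :=
  C (1 / (2 ^ n * (n.factorial : ℝ))) * jacS α n n

lemma jacobiP_eq (α : ℝ) (n : ℕ) {t : ℝ} (ht : t < 1) :
    jacobiP α n t = (jacPoly α n).eval t := by
  rw [jacobiP, iter_eq α n n le_rfl ht, jacF, jacPoly]
  have h : (0 : ℝ) < (1 - t) ^ α := Real.rpow_pos_of_pos (by linarith) _
  have := n.factorial_pos
  simp
  field_simp

lemma integ_w (a : ℝ) (ha : -1 < a) (g : ℝ → ℝ) (hg : Continuous g) :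
    IntervalIntegrable (fun x : ℝ => (1 - x) ^ a * g x) volume (-1) 1 := by
  have h : IntervalIntegrable (fun x : ℝ => x ^ a) volume 2 0 :=
    intervalIntegral.intervalIntegrable_rpow' ha
  have h2 := h.comp_sub_left 1
  norm_num at h2
  exact h2.mul_continuousOn hg.continuousOn

lemma jacF_orth (α : ℝ) (hα : -1 < α) (n k : ℕ) (hk : k ≤ n) (q : Polynomial ℝ)
    (hq : q.degree < k) : ∫ x in (-1 : ℝ)..1, jacF α n k x * q.eval x = 0 := by
  induction k generalizing q with
  | zero =>
    have : q = 0 := by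
      rw [← Polynomial.degree_eq_bot]
      exact Nat.WithBot.lt_zero_iff.mp (by simpa using hq)
    simp [this]
  | succ k ih =>
    have hkn : (k : ℝ) + 1 ≤ n := by exact_mod_cast hk
    have hI : ∀ m ≤ n, ∀ q : Polynomial ℝ,
        IntervalIntegrable (fun x => jacF α n m x * q.eval x) volume (-1) 1 := by
      intro m hm q
      have hm' : (m : ℝ) ≤ n := by exact_mod_cast hm
      have := integ_w (α + n - m) (by linarith)
        (fun x => (1 + x) ^ (n - m) * (jacS α n m).eval x * q.eval x) (by fun_prop)
      refine this.congr ?_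
      intro x _
      simp only [jacF]; ring
    have hd : q.derivative.degree < k := by
      by_cases h0 : q = 0
      · simp [h0]
      · have h1 := Polynomial.degree_derivative_lt h0
        rw [Polynomial.degree_eq_natDegree h0] at h1 hq
        refine h1.trans_le ?_
        have : q.natDegree < k + 1 := by exact_mod_cast hq
        exact_mod_cast Nat.lt_succ_iff.mp this
    have h0 := ih (by omega) _ hd
    have hF := intervalIntegral.integral_eq_sub_of_hasDerivAt_of_le (a := -1) (b := 1)
      (f := fun x => jacF α n k x * q.eval x)
      (f' := fun x => jacF α n (k + 1) x * q.eval x + jacF α n k x * q.derivative.eval x)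
      (by norm_num) ?_ ?_ ((hI _ hk q).add (hI _ (by omega) _))
    · rw [intervalIntegral.integral_add (hI _ hk q) (hI _ (by omega) _), h0] at hF
      have e : n - k ≠ 0 := by omega
      have e2 : α + n - k ≠ 0 := by linarith
      simpa [jacF, e, Real.zero_rpow e2] using hF
    · unfold jacF
      refine Continuous.continuousOn ?_
      have : Continuous fun x : ℝ => (1 - x) ^ (α + n - k) :=
        (continuous_const.sub continuous_id).rpow_const (fun x => Or.inr (by linarith))
      fun_prop
    · intro x hx
      exact (jacF_deriv α n k (by omega) hx.2).mul (q.hasDerivAt x)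

lemma jacPoly_orth (α : ℝ) (hα : -1 < α) (n : ℕ) (q : Polynomial ℝ)
    (hq : q.degree < n) :
    ∫ x in (-1 : ℝ)..1, (1 - x) ^ α * ((jacPoly α n).eval x * q.eval x) = 0 := by
  have h := jacF_orth α hα n n le_rfl q hq
  have : ∀ x : ℝ, (1 - x) ^ α * ((jacPoly α n).eval x * q.eval x)
      = (1 / (2 ^ n * (n.factorial : ℝ))) * (jacF α n n x * q.eval x) := by
    intro x
    simp [jacPoly, jacF]
    ring
  simp only [this, intervalIntegral.integral_const_mul, h, mul_zero]

open Polynomial in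
lemma exists_antideriv (N : ℕ) (p : ℝ[X]) (hp : p.natDegree ≤ N) :
    ∃ A : ℝ[X], A.natDegree ≤ N + 1 ∧ derivative A = p := by
  refine induction_with_natDegree_le
    (fun p => ∃ A : ℝ[X], A.natDegree ≤ N + 1 ∧ derivative A = p) N ⟨0, by simp⟩ ?_ ?_ p hp
  · intro n r _ hn
    refine ⟨C (r / (n + 1)) * X ^ (n + 1), (natDegree_C_mul_X_pow_le _ _).trans (by omega), ?_⟩
    rw [derivative_C_mul_X_pow]
    have : (n : ℝ) + 1 ≠ 0 := by positivity
    congr 2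
    push_cast
    field_simp
  · rintro f g _ _ ⟨A, hA, rfl⟩ ⟨B, hB, rfl⟩
    exact ⟨A + B, natDegree_add_le_of_degree_le hA hB, by simp⟩

open Polynomial in
lemma exists_r_pow (α : ℝ) (hα : -1 < α) (m : ℕ) :
    ∃ r : ℝ[X], r.natDegree ≤ m ∧ C (-(α + 1)) * r + (1 - X) * derivative r = X ^ m := by
  induction m with
  | zero =>
    refine ⟨C (-(α + 1))⁻¹, by simp, ?_⟩
    have : -(α + 1) ≠ 0 := by linarith
    rw [derivative_C, mul_zero, add_zero, ← C_mul, mul_inv_cancel₀ this]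
    simp
  | succ m ih =>
    obtain ⟨r, hr, he⟩ := ih
    have hc : -(α + 1 + (m + 1)) ≠ 0 := by
      have : (0 : ℝ) ≤ m := by positivity
      linarith
    refine ⟨C (-(α + 1 + (m + 1)))⁻¹ * (X ^ (m + 1) - C ((m : ℝ) + 1) * r), ?_, ?_⟩
    · refine (natDegree_C_mul_le _ _).trans ?_
      refine (natDegree_sub_le_of_le (natDegree_X_pow_le _) ((natDegree_C_mul_le _ _).trans
        (hr.trans (Nat.le_succ m)))).trans (by simp)
    · have h1 : C (-(α + 1)) * (C (-(α + 1 + (m + 1)))⁻¹ * (X ^ (m + 1) - C ((m : ℝ) + 1) * r))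
          + (1 - X) * derivative (C (-(α + 1 + (m + 1)))⁻¹ * (X ^ (m + 1) - C ((m : ℝ) + 1) * r))
          = C (-(α + 1 + (m + 1)))⁻¹ * (C (-(α + 1 + (m + 1))) * X ^ (m + 1)
            + C ((m : ℝ) + 1) * (X ^ m -
              (C (-(α + 1)) * r + (1 - X) * derivative r))) := by
        simp only [derivative_C_mul, derivative_sub, derivative_X_pow]
        simp only [C_neg, C_add, Nat.add_sub_cancel, Nat.cast_add, Nat.cast_one, C_1]
        ring
      rw [h1, he, sub_self, mul_zero, add_zero, ← mul_assoc, ← C_mul, inv_mul_cancel₀ hc]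
      simp

open Polynomial in
lemma exists_r (α : ℝ) (hα : -1 < α) (N : ℕ) (q : ℝ[X]) (hq : q.natDegree ≤ N) :
    ∃ r : ℝ[X], r.natDegree ≤ N ∧ C (-(α + 1)) * r + (1 - X) * derivative r = q := by
  refine induction_with_natDegree_le
    (fun q => ∃ r : ℝ[X], r.natDegree ≤ N ∧ C (-(α + 1)) * r + (1 - X) * derivative r = q)
    N ⟨0, by simp⟩ ?_ ?_ q hq
  · intro n c _ hn
    obtain ⟨r, hr, he⟩ := exists_r_pow α hα n
    refine ⟨C c * r, (natDegree_C_mul_le _ _).trans (hr.trans hn), ?_⟩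
    rw [← he, derivative_C_mul]
    ring
  · rintro f g _ _ ⟨A, hA, rfl⟩ ⟨B, hB, rfl⟩
    refine ⟨A + B, natDegree_add_le_of_degree_le hA hB, ?_⟩
    rw [derivative_add]
    ring

open Polynomial in
lemma phat_poly (α : ℝ) (j : ℕ) : ∃ A : ℝ[X], A.natDegree ≤ j + 1 ∧
    derivative A = jacPoly α j ∧ A.eval (-1) = 0 ∧
    ∀ x ∈ Set.Icc (-1 : ℝ) 1, jacobiPhat α (j + 1) x = A.eval x := by
  obtain ⟨A, hA, hd⟩ := exists_antideriv j (jacPoly α j)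
    ((natDegree_C_mul_le _ _).trans (jacS_natDegree α j j))
  refine ⟨A - C (A.eval (-1)), by simpa using hA, by simpa using hd, by simp, ?_⟩
  intro x hx
  have h1 : jacobiPhat α (j + 1) x = ∫ ξ in (-1 : ℝ)..x, (jacPoly α j).eval ξ := by
    simp only [jacobiPhat, Nat.add_sub_cancel, Nat.succ_ne_zero, if_false]
    refine intervalIntegral.integral_congr_ae ?_
    have : ∀ᵐ t : ℝ, t ≠ 1 := by simp [ae_iff]
    filter_upwards [this] with t ht hm
    rw [Set.uIoc_of_le hx.1] at hm
    exact jacobiP_eq α j (lt_of_le_of_ne (hm.2.trans hx.2) ht)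
  rw [h1, ← hd, intervalIntegral.integral_eq_sub_of_hasDerivAt (fun t _ => A.hasDerivAt t)
    ((derivative A).continuous.intervalIntegrable _ _)]
  simp

open Polynomial in
lemma aux_orth (α : ℝ) (hα : -1 < α) (j l : ℕ) (h : j + 3 ≤ l) :
    ∫ x in (-1 : ℝ)..1, (1 - x) ^ α * jacobiPhat α (j + 1) x * jacobiPhat α (l + 1) x = 0 := by
  obtain ⟨A, hA, -, -, hAe⟩ := phat_poly α j
  obtain ⟨B, -, hBd, hB0, hBe⟩ := phat_poly α l
  obtain ⟨r, hr, hre⟩ := exists_r α hα (j + 1) A hA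
  have h1 : ∫ x in (-1 : ℝ)..1, (1 - x) ^ α * jacobiPhat α (j + 1) x * jacobiPhat α (l + 1) x
      = ∫ x in (-1 : ℝ)..1, (1 - x) ^ α * (A.eval x * B.eval x) := by
    refine intervalIntegral.integral_congr ?_
    intro x hx
    rw [Set.uIcc_of_le (by norm_num)] at hx
    simp only [hAe x hx, hBe x hx]
    ring
  have hdeg : ((1 - X) * r : ℝ[X]).degree < l := by
    have hd : (1 - X : ℝ[X]).natDegree ≤ 1 := by compute_degree
    refine degree_le_natDegree.trans_lt ?_
    have : ((1 - X) * r : ℝ[X]).natDegree < l := natDegree_mul_le.trans_lt (by omega)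
    exact_mod_cast this
  have h2 := jacPoly_orth α hα l _ hdeg
  have i1 := integ_w α hα (fun x => A.eval x * B.eval x) (by fun_prop)
  have i2 := integ_w α hα (fun x => (jacPoly α l).eval x * ((1 - X) * r : ℝ[X]).eval x)
    (by fun_prop)
  have hF := intervalIntegral.integral_eq_sub_of_hasDerivAt_of_le (a := -1) (b := 1)
      (f := fun x => (1 - x) ^ (α + 1) * r.eval x * B.eval x)
      (f' := fun x => (1 - x) ^ α * (A.eval x * B.eval x) +
        (1 - x) ^ α * ((jacPoly α l).eval x * ((1 - X) * r : ℝ[X]).eval x))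
      (by norm_num) ?_ ?_ (i1.add i2)
  · rw [intervalIntegral.integral_add i1 i2, h2] at hF
    have e2 : α + 1 ≠ 0 := by linarith
    rw [h1]
    simpa [hB0, Real.zero_rpow e2] using hF
  · refine Continuous.continuousOn ?_
    have : Continuous fun x : ℝ => (1 - x) ^ (α + 1) :=
      (continuous_const.sub continuous_id).rpow_const (fun x => Or.inr (by linarith))
    fun_prop
  · intro x hx
    refine (((hasDerivAt_w (α + 1) hx.2).mul (r.hasDerivAt x)).mul
      (B.hasDerivAt x)).congr_deriv ?_
    simp only [Pi.mul_apply]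
    rw [w_split (α + 1) hx.2, hBd, ← hre]
    simp
    ring

/-- Weighted orthogonality of the integrated Jacobi polynomials `p̂_j^α` and `p̂_l^α`
for `|j - l| > 2`. -/
theorem intJacobi_orthogonality (α : ℝ) (hα : -1 < α) (j l : ℕ)
    (hj : 1 ≤ j) (hl : 1 ≤ l) (hjl : 2 < |(j : ℤ) - (l : ℤ)|) :
    ∫ x in (-1 : ℝ)..1, (1 - x) ^ α * jacobiPhat α j x * jacobiPhat α l x = 0 := by
  obtain ⟨j, rfl⟩ := Nat.exists_eq_add_of_le' hj
  obtain ⟨l, rfl⟩ := Nat.exists_eq_add_of_le' hl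
  rcases lt_abs.mp hjl with h | h
  · have := aux_orth α hα l j (by omega)
    rw [← this]
    congr 1
    funext x
    ring
  · exact aux_orth α hα j l (by omega)
end

section
/- For all continuous functions f : [−1,1] → ℝ and g, h : [0,1] → ℝ, the integral over the reference tetrahedron factorizes under the three-dimensional Duffy transformation: ∫_{T̂₃} f(x/(1−y−z)) g(y/(1−z)) h(z) d(x,y,z) = (∫_{−1}^{1} f(t) dt) · (∫_{0}^{1} (1−s) g(s) ds) · (∫_{0}^{1} (1−t)² h(t) dt). -/
open MeasureTheory

/-- The reference tetrahedron
`T̂₃ = {(x,y,z) : 0 ≤ z ≤ 1, 0 ≤ y ≤ 1 - z, |x| ≤ 1 - y - z}`,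
the convex hull of `(-1,0,0)`, `(1,0,0)`, `(0,1,0)`, `(0,0,1)`. -/
def refTet : Set (ℝ × ℝ × ℝ) :=
  {p | 0 ≤ p.2.2 ∧ p.2.2 ≤ 1 ∧ 0 ≤ p.2.1 ∧ p.2.1 ≤ 1 - p.2.2 ∧ |p.1| ≤ 1 - p.2.1 - p.2.2}

theorem duffy_aux (f g h : ℝ → ℝ) (hf : Continuous f) (hg : Continuous g) (hh : Continuous h)
    (A B C : ℝ) (hA : ∀ x, |f x| ≤ A) (hB : ∀ x, |g x| ≤ B) (hC : ∀ x, |h x| ≤ C) :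
    ∫ p in refTet, f (p.1 / (1 - p.2.1 - p.2.2)) * g (p.2.1 / (1 - p.2.2)) * h p.2.2
      = (∫ t in (-1 : ℝ)..1, f t) * (∫ s in (0 : ℝ)..1, (1 - s) * g s)
          * ∫ t in (0 : ℝ)..1, (1 - t) ^ 2 * h t := by
  have hclosed : IsClosed refTet := by
    have : refTet = {p : ℝ × ℝ × ℝ | 0 ≤ p.2.2} ∩ {p | p.2.2 ≤ 1} ∩ {p | 0 ≤ p.2.1} ∩
        {p | p.2.1 ≤ 1 - p.2.2} ∩ {p | |p.1| ≤ 1 - p.2.1 - p.2.2} := by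
      ext p; simp [refTet, and_assoc]
    rw [this]
    refine ((((isClosed_le ?_ ?_).inter (isClosed_le ?_ ?_)).inter (isClosed_le ?_ ?_)).inter
      (isClosed_le ?_ ?_)).inter (isClosed_le ?_ ?_) <;> fun_prop
  have hms : MeasurableSet refTet := hclosed.measurableSet
  have hsub : refTet ⊆ Set.Icc ((-1 : ℝ), (0 : ℝ), (0 : ℝ)) (1, 1, 1) := by
    rintro ⟨x, y, z⟩ ⟨h1, h2, h3, h4, h5⟩
    simp only [abs_le] at h1 h2 h3 h4 h5
    refine ⟨⟨?_, ?_, ?_⟩, ⟨?_, ?_, ?_⟩⟩ <;> simp only <;> linarith [h5.1, h5.2]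
  have hfin : volume refTet < ⊤ := (measure_mono hsub).trans_lt isCompact_Icc.measure_lt_top
  set Φ : ℝ × ℝ × ℝ → ℝ :=
    fun p => f (p.1 / (1 - p.2.1 - p.2.2)) * g (p.2.1 / (1 - p.2.2)) * h p.2.2 with hΦ
  have hmeas : Measurable Φ := by
    have := hf.measurable
    have := hg.measurable
    have := hh.measurable
    rw [hΦ]
    fun_prop
  have hIntegrable1 : IntegrableOn Φ refTet := by
    refine Measure.integrableOn_of_bounded (M := A * B * C) hfin.ne hmeas.aestronglyMeasurable ?_
    refine Filter.Eventually.of_forall fun p => ?_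
    simp only [hΦ, Real.norm_eq_abs, abs_mul]
    have hA0 : 0 ≤ A := (abs_nonneg _).trans (hA 0)
    have hB0 : 0 ≤ B := (abs_nonneg _).trans (hB 0)
    gcongr
    · exact hA _
    · exact hB _
    · exact hC _
  have hIntegrable2 : Integrable (refTet.indicator Φ) := (integrable_indicator_iff hms).2 hIntegrable1
  rw [← integral_indicator hms]
  rw [Measure.volume_eq_prod] at hIntegrable2 ⊢
  rw [integral_prod_symm _ hIntegrable2]
  have hK := hIntegrable2.integral_prod_right
  set I := ∫ t in (-1 : ℝ)..1, f t with hI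
  set J := ∫ s in (0 : ℝ)..1, (1 - s) * g s with hJ
  have hKe : ∀ y z : ℝ, ∫ x, refTet.indicator Φ (x, y, z) =
      (Set.Icc (0 : ℝ) 1).indicator (fun z => (Set.Icc (0 : ℝ) (1 - z)).indicator
        (fun y => (1 - y - z) * I * g (y / (1 - z)) * h z) y) z := by
    intro y z
    by_cases hz : z ∈ Set.Icc (0 : ℝ) 1
    swap
    · rw [Set.indicator_of_notMem hz]
      have : ∀ x, refTet.indicator Φ (x, y, z) = 0 := fun x =>
        Set.indicator_of_notMem (fun hm => hz ⟨hm.1, hm.2.1⟩) _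
      simp [this]
    rw [Set.indicator_of_mem hz]
    by_cases hy : y ∈ Set.Icc (0 : ℝ) (1 - z)
    swap
    · rw [Set.indicator_of_notMem hy]
      have : ∀ x, refTet.indicator Φ (x, y, z) = 0 := fun x =>
        Set.indicator_of_notMem (fun hm => hy ⟨hm.2.2.1, hm.2.2.2.1⟩) _
      simp [this]
    rw [Set.indicator_of_mem hy]
    have hc : 0 ≤ 1 - y - z := by linarith [hy.2]
    have : (fun x => refTet.indicator Φ (x, y, z)) =
        (Set.Icc (-(1 - y - z)) (1 - y - z)).indicator
          (fun x => f (x / (1 - y - z)) * (g (y / (1 - z)) * h z)) := by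
      funext x
      by_cases hx : x ∈ Set.Icc (-(1 - y - z)) (1 - y - z)
      · rw [Set.indicator_of_mem hx, Set.indicator_of_mem]
        · simp only [hΦ]; ring
        · exact ⟨hz.1, hz.2, hy.1, hy.2, abs_le.2 hx⟩
      · rw [Set.indicator_of_notMem hx, Set.indicator_of_notMem]
        exact fun hm => hx (abs_le.1 hm.2.2.2.2)
    rw [this, integral_indicator measurableSet_Icc, integral_Icc_eq_integral_Ioc,
      ← intervalIntegral.integral_of_le (by linarith), intervalIntegral.integral_mul_const]
    rcases hc.eq_or_lt with h0 | h0
    · rw [← h0]; simp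
    · rw [intervalIntegral.integral_comp_div _ h0.ne', neg_div, div_self h0.ne', smul_eq_mul, ← hI]
      ring
  rw [Measure.volume_eq_prod] at hK ⊢
  rw [integral_prod_symm _ hK]
  simp only [hKe]
  have hL : ∀ z : ℝ, ∫ y, (Set.Icc (0 : ℝ) 1).indicator (fun z => (Set.Icc (0 : ℝ) (1 - z)).indicator
        (fun y => (1 - y - z) * I * g (y / (1 - z)) * h z) y) z =
      (Set.Icc (0 : ℝ) 1).indicator (fun z => I * J * ((1 - z) ^ 2 * h z)) z := by
    intro z
    by_cases hz : z ∈ Set.Icc (0 : ℝ) 1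
    swap
    · simp [Set.indicator_of_notMem hz]
    simp only [Set.indicator_of_mem hz]
    have hd : 0 ≤ 1 - z := by linarith [hz.2]
    rw [integral_indicator measurableSet_Icc, integral_Icc_eq_integral_Ioc,
      ← intervalIntegral.integral_of_le hd]
    rcases hd.eq_or_lt with h0 | h0
    · rw [← h0]; simp
    · have : ∀ y, (1 - y - z) * I * g (y / (1 - z)) * h z =
          ((1 - y / (1 - z)) * g (y / (1 - z))) * ((1 - z) * I * h z) := by
        intro y
        have : 1 - y - z = (1 - y / (1 - z)) * (1 - z) := by
          field_simp
          ring
        rw [this]; ring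
      simp only [this]
      rw [intervalIntegral.integral_mul_const,
        intervalIntegral.integral_comp_div (fun s => (1 - s) * g s) h0.ne', zero_div,
        div_self h0.ne', smul_eq_mul, ← hJ]
      ring
  simp only [hL]
  rw [integral_indicator measurableSet_Icc, integral_Icc_eq_integral_Ioc,
      ← intervalIntegral.integral_of_le zero_le_one, intervalIntegral.integral_const_mul]

/-- A continuous function on a segment agrees there with a bounded continuous function. -/
theorem duffy_ext (a b : ℝ) (hab : a ≤ b) (f : ℝ → ℝ) (hf : ContinuousOn f (Set.Icc a b)) :
    ∃ F : ℝ → ℝ, Continuous F ∧ (∃ A, ∀ x, |F x| ≤ A) ∧ ∀ x ∈ Set.Icc a b, F x = f x := by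
  refine ⟨Set.IccExtend hab ((Set.Icc a b).domRestrict f), hf.domRestrict.Icc_extend', ?_, ?_⟩
  · obtain ⟨A, hA⟩ := isCompact_Icc.exists_bound_of_continuousOn hf
    exact ⟨A, fun x => hA _ (Set.projIcc a b hab x).2⟩
  · intro x hx
    rw [Set.IccExtend_of_mem _ _ hx]; rfl

/-- Factorization of integrals over the reference tetrahedron under the
three-dimensional Duffy transformation. -/
theorem duffy_tetrahedron (f g h : ℝ → ℝ)
    (hf : ContinuousOn f (Set.Icc (-1 : ℝ) 1)) (hg : ContinuousOn g (Set.Icc (0 : ℝ) 1))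
    (hh : ContinuousOn h (Set.Icc (0 : ℝ) 1)) :
    ∫ p in refTet, f (p.1 / (1 - p.2.1 - p.2.2)) * g (p.2.1 / (1 - p.2.2)) * h p.2.2
      = (∫ t in (-1 : ℝ)..1, f t) * (∫ s in (0 : ℝ)..1, (1 - s) * g s)
          * ∫ t in (0 : ℝ)..1, (1 - t) ^ 2 * h t := by
  obtain ⟨F, hF, ⟨A, hA⟩, hFf⟩ := duffy_ext _ _ (by norm_num) f hf
  obtain ⟨G, hG, ⟨B, hB⟩, hGg⟩ := duffy_ext _ _ (by norm_num) g hg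
  obtain ⟨H, hH, ⟨C, hC⟩, hHh⟩ := duffy_ext _ _ (by norm_num) h hh
  have key := duffy_aux F G H hF hG hH A B C hA hB hC
  have e1 : ∫ t in (-1 : ℝ)..1, F t = ∫ t in (-1 : ℝ)..1, f t := by
    refine intervalIntegral.integral_congr fun t ht => ?_
    rw [Set.uIcc_of_le (by norm_num)] at ht
    exact hFf t ht
  have e2 : ∫ s in (0 : ℝ)..1, (1 - s) * G s = ∫ s in (0 : ℝ)..1, (1 - s) * g s := by
    refine intervalIntegral.integral_congr fun t ht => ?_
    rw [Set.uIcc_of_le (by norm_num)] at ht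
    simp only [hGg t ht]
  have e3 : ∫ t in (0 : ℝ)..1, (1 - t) ^ 2 * H t = ∫ t in (0 : ℝ)..1, (1 - t) ^ 2 * h t := by
    refine intervalIntegral.integral_congr fun t ht => ?_
    rw [Set.uIcc_of_le (by norm_num)] at ht
    simp only [hHh t ht]
  rw [e1, e2, e3] at key
  rw [← key]
  have hms : MeasurableSet refTet := by
    have : refTet = {p : ℝ × ℝ × ℝ | 0 ≤ p.2.2} ∩ {p | p.2.2 ≤ 1} ∩ {p | 0 ≤ p.2.1} ∩
        {p | p.2.1 ≤ 1 - p.2.2} ∩ {p | |p.1| ≤ 1 - p.2.1 - p.2.2} := by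
      ext p; simp [refTet, and_assoc]
    rw [this]
    refine IsClosed.measurableSet (((((isClosed_le ?_ ?_).inter (isClosed_le ?_ ?_)).inter
      (isClosed_le ?_ ?_)).inter (isClosed_le ?_ ?_)).inter (isClosed_le ?_ ?_)) <;> fun_prop
  refine setIntegral_congr_fun hms ?_
  rintro ⟨x, y, z⟩ ⟨h1, h2, h3, h4, h5⟩
  simp only at h1 h2 h3 h4 h5 ⊢
  have hc : 0 ≤ 1 - y - z := by linarith
  have hd : 0 ≤ 1 - z := by linarith
  rw [hHh z ⟨h1, h2⟩, hGg _ ⟨div_nonneg h3 hd, div_le_one_of_le₀ h4 hd⟩, hFf]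
  apply abs_le.1
  rw [abs_div, abs_of_nonneg hc]
  exact div_le_one_of_le₀ h5 hc
end

section
/- For integers i ≥ 1 and j ≥ 0, the normal trace of the face basis function φ_{ij} := −∇u_{i+1} × ∇v_{(i+1)(j+1)} on the bottom face of the reference tetrahedron satisfies the identity (φ_{ij}(x,y,0)) · (0,0,−1) = 2 p_i^0(x/(1−y)) (1−y)^i p_j^{2i+1}(2y−1) for all (x,y) with 0 < y < 1 and |x| < 1−y. -/
open MeasureTheory

/-- Partial derivative in the first coordinate. -/
noncomputable def pdx (f : ℝ × ℝ × ℝ → ℝ) (p : ℝ × ℝ × ℝ) : ℝ :=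
  deriv (fun x => f (x, p.2.1, p.2.2)) p.1

/-- Partial derivative in the second coordinate. -/
noncomputable def pdy (f : ℝ × ℝ × ℝ → ℝ) (p : ℝ × ℝ × ℝ) : ℝ :=
  deriv (fun y => f (p.1, y, p.2.2)) p.2.1

/-- Partial derivative in the third coordinate. -/
noncomputable def pdz (f : ℝ × ℝ × ℝ → ℝ) (p : ℝ × ℝ × ℝ) : ℝ :=
  deriv (fun z => f (p.1, p.2.1, z)) p.2.2

/-- Gradient of a scalar field on `ℝ³`. -/
noncomputable def grad3 (f : ℝ × ℝ × ℝ → ℝ) (p : ℝ × ℝ × ℝ) : ℝ × ℝ × ℝ :=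
  (pdx f p, pdy f p, pdz f p)

/-- Cross product on `ℝ³`. -/
noncomputable def cross3 (a b : ℝ × ℝ × ℝ) : ℝ × ℝ × ℝ :=
  (a.2.1 * b.2.2 - a.2.2 * b.2.1, a.2.2 * b.1 - a.1 * b.2.2, a.1 * b.2.1 - a.2.1 * b.1)

/-- Euclidean dot product on `ℝ³`. -/
noncomputable def dot3 (a b : ℝ × ℝ × ℝ) : ℝ :=
  a.1 * b.1 + a.2.1 * b.2.1 + a.2.2 * b.2.2

/-- The scalar field `u_i(x,y,z) = p̂_i^0(x/(1-y-z)) (1-y-z)^i`. -/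
noncomputable def uFun (i : ℕ) (p : ℝ × ℝ × ℝ) : ℝ :=
  jacobiPhat 0 i (p.1 / (1 - p.2.1 - p.2.2)) * (1 - p.2.1 - p.2.2) ^ i

/-- The scalar field `v_{ij}(x,y,z) = p̂_j^{2i-1}((2y+z-1)/(1-z)) (1-z)^j`. -/
noncomputable def vFun (i j : ℕ) (p : ℝ × ℝ × ℝ) : ℝ :=
  jacobiPhat (2 * (i : ℝ) - 1) j ((2 * p.2.1 + p.2.2 - 1) / (1 - p.2.2)) * (1 - p.2.2) ^ j

/-- The face basis function `φ_{ij} = -∇u_{i+1} × ∇v_{(i+1)(j+1)}` (for `i ≥ 1`). -/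
noncomputable def phiFace (i j : ℕ) (p : ℝ × ℝ × ℝ) : ℝ × ℝ × ℝ :=
  -cross3 (grad3 (uFun (i + 1)) p) (grad3 (vFun (i + 1) (j + 1)) p)

theorem jacobiP_continuousOn (m n : ℕ) : ContinuousOn (jacobiP (m : ℝ) n) (Set.Iio 1) := by
  have h1 : ContDiff ℝ n (fun t : ℝ => (1 - t) ^ (m : ℝ) * (t ^ 2 - 1) ^ n) := by
    simp only [Real.rpow_natCast]
    fun_prop
  have h2 : Continuous (iteratedDeriv n (fun t : ℝ => (1 - t) ^ (m : ℝ) * (t ^ 2 - 1) ^ n)) :=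
    h1.continuous_iteratedDeriv n le_rfl
  have h3 : ContinuousOn (fun x : ℝ => 1 / (2 ^ n * (n.factorial : ℝ) * (1 - x) ^ (m : ℝ)))
      (Set.Iio 1) := by
    simp only [Real.rpow_natCast]
    refine ContinuousOn.div (by fun_prop) (by fun_prop) ?_
    intro x hx
    have hx' : (0 : ℝ) < 1 - x := sub_pos.mpr hx
    positivity
  exact h3.mul h2.continuousOn

theorem jacobiPhat_hasDerivAt (m n : ℕ) (x : ℝ) (hx : x < 1) :
    HasDerivAt (jacobiPhat (m : ℝ) (n + 1)) (jacobiP (m : ℝ) n x) x := by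
  have hc := jacobiP_continuousOn m n
  have h : jacobiPhat (m : ℝ) (n + 1) = fun x => ∫ ξ in (-1 : ℝ)..x, jacobiP (m : ℝ) n ξ := by
    funext t
    simp [jacobiPhat]
  rw [h]
  refine intervalIntegral.integral_hasDerivAt_right ?_ ?_ ?_
  · apply ContinuousOn.intervalIntegrable
    refine hc.mono ?_
    intro t ht
    have := ht.2
    exact lt_of_le_of_lt this (max_lt (by norm_num) hx)
  · exact hc.stronglyMeasurableAtFilter isOpen_Iio x hx
  · exact hc.continuousAt (isOpen_Iio.mem_nhds hx)

/-- The normal trace of `φ_{ij}` on the bottom face of the reference tetrahedron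
(with outer unit normal `(0,0,-1)`) equals `2 p_i^0(x/(1-y)) (1-y)^i p_j^{2i+1}(2y-1)`. -/
theorem face_basis_normal_trace (i j : ℕ) (hi : 1 ≤ i) (x y : ℝ)
    (hy0 : 0 < y) (hy1 : y < 1) (hx : |x| < 1 - y) :
    dot3 (phiFace i j (x, y, 0)) (0, 0, -1)
      = 2 * jacobiP 0 i (x / (1 - y)) * (1 - y) ^ i
          * jacobiP (2 * (i : ℝ) + 1) j (2 * y - 1) := by
  have hy : (0 : ℝ) < 1 - y := by linarith
  have hne : (1 : ℝ) - y ≠ 0 := hy.ne'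
  have hux : pdx (uFun (i + 1)) (x, y, 0) = jacobiP 0 i (x / (1 - y)) * (1 - y) ^ i := by
    have hlt : x / (1 - y) < 1 := by
      rw [div_lt_one hy]
      exact lt_of_abs_lt hx
    have h0 := jacobiPhat_hasDerivAt 0 i (x / (1 - y)) hlt
    rw [Nat.cast_zero] at h0
    have h1 := (h0.comp x ((hasDerivAt_id x).div_const (1 - y))).mul_const ((1 - y) ^ (i + 1))
    have h2 : pdx (uFun (i + 1)) (x, y, 0)
        = jacobiP 0 i (x / (1 - y)) * (1 / (1 - y)) * (1 - y) ^ (i + 1) := by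
      rw [← h1.deriv]
      simp only [pdx, uFun, Function.comp_def, id, sub_zero]
    rw [h2]
    field_simp
    ring
  have hvx : pdx (vFun (i + 1) (j + 1)) (x, y, 0) = 0 := by
    simp [pdx, vFun]
  have hvy : pdy (vFun (i + 1) (j + 1)) (x, y, 0)
      = jacobiP (2 * (i : ℝ) + 1) j (2 * y - 1) * 2 := by
    have h0 := jacobiPhat_hasDerivAt (2 * i + 1) j (2 * y - 1) (by linarith)
    push_cast at h0
    have h1 : HasDerivAt (fun t : ℝ => 2 * t - 1) 2 y := by
      simpa using ((hasDerivAt_id y).const_mul 2).sub_const 1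
    have h2 := (HasDerivAt.comp y h0 h1).deriv
    have h3 : (2 * ((i : ℝ) + 1) - 1) = 2 * (i : ℝ) + 1 := by ring
    simpa [pdy, vFun, Function.comp_def, h3] using h2
  simp only [dot3, phiFace, cross3, grad3, hux, hvx, hvy, Prod.fst_neg, Prod.snd_neg]
  ring
end

section
/- For every integer j ≥ 1, the normal trace of the face basis function φ_{0j} := ∇ × (N₀ v_{2j}) on the bottom face of the reference tetrahedron satisfies the identity (φ_{0j}(x,y,0)) · (0,0,−1) = p̂_j^3(2y−1) − (1−y) p_{j−1}^3(2y−1) for all (x,y) with 0 < y < 1 and |x| < 1−y. -/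
open MeasureTheory

/-- Curl of a vector field on `ℝ³`. -/
noncomputable def curl3 (v : ℝ × ℝ × ℝ → ℝ × ℝ × ℝ) (p : ℝ × ℝ × ℝ) : ℝ × ℝ × ℝ :=
  (pdy (fun q => (v q).2.2) p - pdz (fun q => (v q).2.1) p,
   pdz (fun q => (v q).1) p - pdx (fun q => (v q).2.2) p,
   pdx (fun q => (v q).2.1) p - pdy (fun q => (v q).1) p)

/-- The lowest-order Nédélec field `N₀ = (1/2)(y+z-1, -x, -x)` for the edge from
`(-1,0,0)` to `(1,0,0)`. -/
noncomputable def nedelec0 (p : ℝ × ℝ × ℝ) : ℝ × ℝ × ℝ :=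
  ((p.2.1 + p.2.2 - 1) / 2, -p.1 / 2, -p.1 / 2)

/-- The face basis function `φ_{0j} = ∇ × (N₀ v_{2j})` (for `j ≥ 1`). -/
noncomputable def phiFace0 (j : ℕ) (p : ℝ × ℝ × ℝ) : ℝ × ℝ × ℝ :=
  curl3 (fun q => vFun 2 j q • nedelec0 q) p

lemma jacobiP_three_continuousOn (n : ℕ) : ContinuousOn (jacobiP 3 n) (Set.Iio 1) := by
  have e : jacobiP 3 n = fun x => 1 / (2 ^ n * (n.factorial : ℝ) * (1 - x) ^ 3) *
      iteratedDeriv n (fun t : ℝ => (1 - t) ^ 3 * (t ^ 2 - 1) ^ n) x := by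
    have h : ∀ t : ℝ, t ^ (3 : ℝ) = t ^ 3 := fun t => by
      exact_mod_cast Real.rpow_natCast t 3
    funext x
    simp only [jacobiP, h]
  rw [e]
  have hc : ContDiff ℝ n (fun t : ℝ => (1 - t) ^ 3 * (t ^ 2 - 1) ^ n) := by fun_prop
  apply ContinuousOn.mul
  · apply ContinuousOn.div continuousOn_const (by fun_prop)
    intro x hx
    have h1 : (0 : ℝ) < 1 - x := sub_pos.mpr hx
    positivity
  · exact (hc.continuous_iteratedDeriv n le_rfl).continuousOn

lemma jacobiPhat_three_hasDerivAt (j : ℕ) (hj : 1 ≤ j) (s : ℝ) (hs : s < 1) :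
    HasDerivAt (jacobiPhat 3 j) (jacobiP 3 (j - 1) s) s := by
  have e : jacobiPhat 3 j = fun x => ∫ ξ in (-1 : ℝ)..x, jacobiP 3 (j - 1) ξ := by
    funext x
    simp only [jacobiPhat, if_neg (show j ≠ 0 by omega)]
  rw [e]
  have hc := jacobiP_three_continuousOn (j - 1)
  apply intervalIntegral.integral_hasDerivAt_right
  · apply ContinuousOn.intervalIntegrable
    apply hc.mono
    intro t ht
    rw [Set.mem_uIcc] at ht
    simp only [Set.mem_Iio]
    rcases ht with h | h <;> linarith [h.1, h.2]
  · exact hc.stronglyMeasurableAtFilter isOpen_Iio s hs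
  · exact hc.continuousAt (isOpen_Iio.mem_nhds hs)

/-- The normal trace of `φ_{0j}` on the bottom face of the reference tetrahedron
(with outer unit normal `(0,0,-1)`) equals `p̂_j^3(2y-1) - (1-y) p_{j-1}^3(2y-1)`. -/
theorem face_basis0_normal_trace (j : ℕ) (hj : 1 ≤ j) (x y : ℝ)
    (hy0 : 0 < y) (hy1 : y < 1) (hx : |x| < 1 - y) :
    dot3 (phiFace0 j (x, y, 0)) (0, 0, -1)
      = jacobiPhat 3 j (2 * y - 1) - (1 - y) * jacobiP 3 (j - 1) (2 * y - 1) := by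
  have hv : ∀ a b : ℝ, vFun 2 j (a, b, 0) = jacobiPhat 3 j (2 * b - 1) := by
    intro a b
    have h3 : (2 * ((2 : ℕ) : ℝ) - 1) = 3 := by norm_num
    simp only [vFun, h3]
    simp
  have hd1 : HasDerivAt (fun a : ℝ => jacobiPhat 3 j (2 * y - 1) * (-a / 2))
      (jacobiPhat 3 j (2 * y - 1) * (-1 / 2)) x :=
    (((hasDerivAt_id x).neg).div_const 2).const_mul _
  have hin : HasDerivAt (fun b : ℝ => 2 * b - 1) (2 * 1) y :=
    ((hasDerivAt_id y).const_mul 2).sub_const 1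
  have hp := (jacobiPhat_three_hasDerivAt j hj (2 * y - 1) (by linarith)).comp y hin
  have hl : HasDerivAt (fun b : ℝ => (b + 0 - 1) / 2) (1 / 2) y :=
    (((hasDerivAt_id y).add_const 0).sub_const 1).div_const 2
  have hd2 : HasDerivAt (fun b : ℝ => jacobiPhat 3 j (2 * b - 1) * ((b + 0 - 1) / 2)) _ y :=
    hp.mul hl
  simp only [dot3, phiFace0, curl3, pdx, pdy, Prod.smul_fst, Prod.smul_snd, smul_eq_mul,
    hv, nedelec0]
  rw [hd1.deriv, hd2.deriv]
  simp only [Function.comp]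
  ring
end

section
/- On the triangle F, the normal-trace functions of total order exactly k are L²(F)-orthogonal to all polynomials of degree at most k−1: for every integer k ≥ 1, for every pair (i,j) with i ≥ 1, j ≥ 0, i + j = k, and for every polynomial q : ℝ² → ℝ of total degree ≤ k−1, one has ∫_F g_{ij}(x,y) q(x,y) dx dy = 0 and ∫_F h_k(y) q(x,y) dx dy = 0, where g_{ij}(x,y) := p_i^0(x/(1−y)) (1−y)^i p_j^{2i+1}(2y−1) and h_k(y) := p̂_k^3(2y−1) − (1−y) p_{k−1}^3(2y−1). -/
open MeasureTheory

/-- The triangle `F = {(x,y) : 0 ≤ y ≤ 1, |x| ≤ 1 - y}`. -/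
def faceTri : Set (ℝ × ℝ) := {p | 0 ≤ p.2 ∧ p.2 ≤ 1 ∧ |p.1| ≤ 1 - p.2}

/-- The normal-trace function `g_{ij}(x,y) = p_i^0(x/(1-y)) (1-y)^i p_j^{2i+1}(2y-1)`. -/
noncomputable def gFun (i j : ℕ) (p : ℝ × ℝ) : ℝ :=
  jacobiP 0 i (p.1 / (1 - p.2)) * (1 - p.2) ^ i
    * jacobiP (2 * (i : ℝ) + 1) j (2 * p.2 - 1)

/-- The normal-trace function `h_k(y) = p̂_k^3(2y-1) - (1-y) p_{k-1}^3(2y-1)`. -/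
noncomputable def hFun (k : ℕ) (y : ℝ) : ℝ :=
  jacobiPhat 3 k (2 * y - 1) - (1 - y) * jacobiP 3 (k - 1) (2 * y - 1)

open Polynomial in
theorem aux_int_deriv (p : ℝ[X]) :
    ∫ x in (-1:ℝ)..1, (derivative p).eval x = p.eval 1 - p.eval (-1) :=
  intervalIntegral.integral_eq_sub_of_hasDerivAt (fun x _ => p.hasDerivAt x)
    ((derivative p).continuous.intervalIntegrable _ _)

open Polynomial in
theorem aux_orth_s12 (l : ℕ) : ∀ (W s : ℝ[X]), (X ^ 2 - 1 : ℝ[X]) ^ l ∣ W → s.degree < l →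
    ∫ x in (-1:ℝ)..1, (derivative^[l] W * s).eval x = 0 := by
  induction l with
  | zero =>
    intro W s _ hs
    have : s = 0 := by
      rw [← Polynomial.degree_eq_bot]
      simpa [Nat.WithBot.lt_zero_iff] using hs
    simp [this]
  | succ l ih =>
    intro W s hW hs
    have h1 : derivative^[l+1] W * s
        = derivative (derivative^[l] W * s) - derivative^[l] W * derivative s := by
      rw [Function.iterate_succ_apply', derivative_mul]; ring
    have h2 : (X ^ 2 - 1 : ℝ[X]) ∣ derivative^[l] W := by
      have := pow_sub_dvd_iterate_derivative_of_pow_dvd l hW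
      simpa using this
    obtain ⟨V, hV⟩ := h2
    have h3 : (derivative s).degree < l := by
      by_cases h0 : s = 0
      · simp [h0]
      have h4 := Polynomial.degree_derivative_lt h0
      have h5 : s.degree ≤ l := by
        rw [← Polynomial.natDegree_lt_iff_degree_lt h0] at hs
        rw [← Polynomial.natDegree_le_iff_degree_le]; omega
      exact lt_of_lt_of_le h4 h5
    have h6 := ih W (derivative s) (dvd_trans (pow_dvd_pow _ (Nat.le_succ l)) hW) h3
    rw [h1]
    simp only [Polynomial.eval_sub]
    rw [intervalIntegral.integral_sub, aux_int_deriv, h6, hV]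
    · simp
    · exact (Polynomial.continuous _).intervalIntegrable _ _
    · exact (Polynomial.continuous _).intervalIntegrable _ _

open Polynomial in
theorem aux_iterDeriv (p : ℝ[X]) (n : ℕ) :
    iteratedDeriv n (fun t : ℝ => p.eval t) = fun t => (derivative^[n] p).eval t := by
  induction n with
  | zero => simp
  | succ n ih =>
    rw [iteratedDeriv_succ, ih]
    funext t
    rw [Polynomial.deriv, Function.iterate_succ_apply']

open Polynomial in
theorem aux_jacobi (m n : ℕ) : ∃ J : ℝ[X],
    (∀ x : ℝ, (1 - x) ^ m ≠ 0 → jacobiP (m : ℝ) n x = J.eval x) ∧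
    ∀ s : ℝ[X], s.degree < n → ∫ x in (-1:ℝ)..1, ((1 - X) ^ m * J * s).eval x = 0 := by
  have hd : (X ^ 2 - 1 : ℝ[X]) ^ n ∣ (1 - X) ^ m * (X ^ 2 - 1) ^ n := dvd_mul_left _ _
  have hd2 : (1 - X : ℝ[X]) ^ m ∣ derivative^[n] ((1 - X) ^ m * (X ^ 2 - 1) ^ n) := by
    have : (1 - X : ℝ[X]) ^ (m + n) ∣ (1 - X) ^ m * (X ^ 2 - 1) ^ n := by
      rw [pow_add]
      exact mul_dvd_mul_left _ (pow_dvd_pow_of_dvd ⟨-(1 + X), by ring⟩ _)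
    simpa using pow_sub_dvd_iterate_derivative_of_pow_dvd n this
  obtain ⟨J, hJ⟩ := hd2
  refine ⟨C (1 / (2 ^ n * (n.factorial : ℝ))) * J, ?_, ?_⟩
  · intro x hx
    unfold jacobiP
    have : (fun t : ℝ => (1 - t) ^ (m : ℝ) * (t ^ 2 - 1) ^ n)
        = fun t : ℝ => ((1 - X) ^ m * (X ^ 2 - 1) ^ n : ℝ[X]).eval t := by
      funext t; simp
    rw [this, aux_iterDeriv, hJ]
    simp only [Real.rpow_natCast, eval_mul, eval_pow, eval_sub, eval_one, eval_X, eval_C]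
    have := n.factorial_ne_zero
    field_simp
  · intro s hs
    have h := aux_orth_s12 n _ s hd hs
    rw [hJ] at h
    have : ∀ x : ℝ, ((1 - X) ^ m * (C (1 / (2 ^ n * (n.factorial : ℝ))) * J) * s).eval x
      = (1 / (2 ^ n * (n.factorial : ℝ))) * ((1 - X) ^ m * J * s).eval x := by
      intro x; simp only [eval_mul, eval_C]; ring
    simp only [this]
    rw [intervalIntegral.integral_const_mul, h, mul_zero]

open Polynomial in
theorem aux_antideriv (p : ℝ[X]) : ∃ P : ℝ[X], derivative P = p := by
  induction p using Polynomial.induction_on' with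
  | add p q hp hq =>
    obtain ⟨P, hP⟩ := hp
    obtain ⟨Q, hQ⟩ := hq
    exact ⟨P + Q, by simp [hP, hQ]⟩
  | monomial n a =>
    refine ⟨monomial (n + 1) (a / (n + 1)), ?_⟩
    rw [derivative_monomial]
    have : (n : ℝ) + 1 ≠ 0 := by positivity
    simp; field_simp

open Polynomial in
theorem aux_solve (n : ℕ) (s : ℝ[X]) (hs : s.degree < n) : ∃ u : ℝ[X], u.degree < n ∧
    derivative ((1 - X) ^ 3 * u) = (1 - X) ^ 2 * s := by
  induction n generalizing s with
  | zero =>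
    have : s = 0 := by
      rw [← Polynomial.degree_eq_bot]
      simpa [Nat.WithBot.lt_zero_iff] using hs
    exact ⟨0, by simp [this]⟩
  | succ n ih =>
    set c := s.coeff n with hc
    set d : ℝ := -c / (n + 3) with hdd
    set u0 : ℝ[X] := C d * (X - C 1) ^ n with hu0
    have hn3 : (n : ℝ) + 3 ≠ 0 := by positivity
    have hmon : ((X - C 1 : ℝ[X]) ^ n).Monic := (monic_X_sub_C 1).pow n
    have hnd : ((X - C 1 : ℝ[X]) ^ n).natDegree = n := by
      rw [natDegree_pow, natDegree_X_sub_C, mul_one]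
    have hcn : ((X - C 1 : ℝ[X]) ^ n).coeff n = 1 := by
      have := hmon.coeff_natDegree
      rwa [hnd] at this
    have hcm : ∀ m, n < m → ((X - C 1 : ℝ[X]) ^ n).coeff m = 0 := fun m hm =>
      coeff_eq_zero_of_natDegree_lt (by rw [hnd]; exact hm)
    have hu0d : Polynomial.degree u0 < ((n + 1 : ℕ) : WithBot ℕ) := by
      rw [Polynomial.degree_lt_iff_coeff_zero]
      intro m hm
      rw [hu0, coeff_C_mul, hcm m (by omega), mul_zero]
    have e : -3 * u0 + (1 - X) * derivative u0 = C c * (X - C 1) ^ n := by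
      have h1 : (1 - X) * derivative u0 = - C (n : ℝ) * u0 := by
        rcases n with _ | n
        · simp [hu0]
        · rw [hu0, derivative_C_mul, derivative_X_sub_C_pow]
          simp
          ring
      have h2 : c = -(n + 3) * d := by rw [hdd]; field_simp
      have h3 : (C (3 : ℝ) : ℝ[X]) = 3 := map_ofNat C 3
      rw [h1, h2, hu0]
      simp only [C_mul, C_neg, C_add, h3]
      ring
    have hr : Polynomial.degree (s - (-3 * u0 + (1 - X) * derivative u0))
        < ((n : ℕ) : WithBot ℕ) := by
      rw [Polynomial.degree_lt_iff_coeff_zero]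
      intro m hm
      rw [e, coeff_sub, coeff_C_mul]
      rcases hm.eq_or_lt with rfl | hm
      · rw [hcn]; simp [hc]
      · rw [hcm m hm, (Polynomial.degree_lt_iff_coeff_zero _ _).1 hs m hm]; simp
    obtain ⟨u, hu, hu'⟩ := ih _ hr
    refine ⟨u + u0, ?_, ?_⟩
    · refine lt_of_le_of_lt (degree_add_le _ _) (max_lt (hu.trans ?_) hu0d)
      exact_mod_cast Nat.lt_succ_self n
    · have h3 : derivative ((1 - X : ℝ[X]) ^ 3) = -3 * (1 - X) ^ 2 := by
        rw [derivative_pow]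
        simp
        left
        exact map_ofNat C 3
      rw [mul_add, derivative_add, hu', derivative_mul (f := (1 - X) ^ 3), h3]
      ring

open Polynomial in
theorem aux_h (k : ℕ) (hk : 1 ≤ k) : ∃ H : ℝ[X],
    (∀ y : ℝ, y ≠ 1 → hFun k y = H.eval (2 * y - 1)) ∧
    ∀ r : ℝ[X], r.degree < k → ∫ x in (-1:ℝ)..1, ((1 - X) * H * r).eval x = 0 := by
  obtain ⟨J, hJ, hJo⟩ := aux_jacobi 3 (k - 1)
  obtain ⟨P0, hP0⟩ := aux_antideriv J
  obtain ⟨P, hP, hP1⟩ : ∃ P : ℝ[X], derivative P = J ∧ P.eval (-1) = 0 :=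
    ⟨P0 - C (P0.eval (-1)), by simp [hP0], by simp⟩
  refine ⟨P - C (1/2) * (1 - X) * J, ?_, ?_⟩
  · intro y hy
    have hJ' : ∀ x : ℝ, x ≠ 1 → jacobiP 3 (k - 1) x = J.eval x := by
      intro x hx
      have := hJ x (pow_ne_zero _ (sub_ne_zero.2 hx.symm))
      simpa using this
    have hae : ∀ᵐ x : ℝ, jacobiP 3 (k - 1) x = J.eval x := by
      have : ∀ᵐ x : ℝ, x ≠ 1 := by simp [ae_iff]
      filter_upwards [this] with x hx using hJ' x hx
    have hph : jacobiPhat 3 k (2 * y - 1) = P.eval (2 * y - 1) := by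
      unfold jacobiPhat
      rw [if_neg (by omega), intervalIntegral.integral_congr_ae (g := fun x => J.eval x)
        (by filter_upwards [hae] with x hx _ using hx)]
      rw [intervalIntegral.integral_eq_sub_of_hasDerivAt (f := fun x => P.eval x)
        (fun x _ => by rw [← hP]; exact P.hasDerivAt x) (J.continuous.intervalIntegrable _ _),
        hP1, sub_zero]
    unfold hFun
    rw [hph, hJ' _ (by intro h; apply hy; linarith)]
    simp only [eval_mul, eval_sub, eval_C, eval_one, eval_X]
    ring
  · intro r hr
    obtain ⟨u, hu, hu'⟩ := aux_solve (k - 1) (derivative r) (by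
      by_cases h0 : r = 0
      · simp [h0]
      refine lt_of_lt_of_le (degree_derivative_lt h0) ?_
      rw [← Polynomial.natDegree_lt_iff_degree_lt h0] at hr
      rw [← Polynomial.natDegree_le_iff_degree_le]; omega)
    have e : (1 - X) * (P - C (1/2) * (1 - X) * J) * r =
        derivative (C (1/2) * ((1 - X) ^ 3 * u * P - (1 - X) ^ 2 * P * r))
          - C (1/2) * ((1 - X) ^ 3 * J * u) := by
      rw [derivative_C_mul, derivative_sub, derivative_mul, hu', hP]
      have h3 : derivative ((1 - X : ℝ[X]) ^ 2) = -2 * (1 - X) := by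
        rw [derivative_pow]
        simp
        left
        exact map_ofNat C 2
      have h2 : (C (1/2) : ℝ[X]) * 2 = 1 := by
        rw [← C_ofNat, ← C_mul]; norm_num
      simp only [derivative_mul, h3, hP]
      linear_combination ((1 - X) * P * r) * (-h2)
    rw [e]
    simp only [Polynomial.eval_sub]
    rw [intervalIntegral.integral_sub, aux_int_deriv]
    · have := hJo u hu
      simp only [eval_mul, eval_C] at this ⊢
      rw [intervalIntegral.integral_const_mul, this]
      simp [hP1]
    · exact (Polynomial.continuous _).intervalIntegrable _ _
    · exact (Polynomial.continuous _).intervalIntegrable _ _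

theorem aux_tri_compact : IsCompact faceTri := by
  refine IsCompact.of_isClosed_subset (isCompact_Icc (a := ((-1, 0) : ℝ × ℝ)) (b := (1, 1))) ?_ ?_
  · have : faceTri = {p : ℝ × ℝ | 0 ≤ p.2} ∩ ({p | p.2 ≤ 1} ∩ {p | |p.1| ≤ 1 - p.2}) := rfl
    rw [this]
    exact (isClosed_le (by fun_prop) (by fun_prop)).inter
      ((isClosed_le (by fun_prop) (by fun_prop)).inter (isClosed_le (by fun_prop) (by fun_prop)))
  · rintro ⟨x, y⟩ ⟨h0, h1, h2⟩
    simp only at h0 h1 h2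
    have := abs_le.1 h2
    simp only [Set.mem_Icc, Prod.mk_le_mk]
    refine ⟨⟨by linarith, h0⟩, by linarith, h1⟩

theorem aux_fubini (f : ℝ × ℝ → ℝ) (hf : IntegrableOn f faceTri) :
    ∫ p in faceTri, f p
      = ∫ y in (0:ℝ)..1, (1 - y) * ∫ u in (-1:ℝ)..1, f ((1 - y) * u, y) := by
  have hm : MeasurableSet faceTri := aux_tri_compact.measurableSet
  rw [← integral_indicator hm, Measure.volume_eq_prod,
    integral_prod_symm _ ((integrable_indicator_iff hm).2 hf),
    intervalIntegral.integral_of_le zero_le_one, ← integral_Icc_eq_integral_Ioc,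
    ← integral_indicator measurableSet_Icc]
  congr 1
  funext y
  by_cases hy : y ∈ Set.Icc (0:ℝ) 1
  · rw [Set.indicator_of_mem hy,
      intervalIntegral.mul_integral_comp_mul_left (f := fun x => f (x, y)),
      intervalIntegral.integral_of_le (by linarith [hy.2]), ← integral_Icc_eq_integral_Ioc,
      ← integral_indicator measurableSet_Icc]
    congr 1
    funext x
    simp only [Set.indicator]
    congr 1
    simp only [faceTri, Set.mem_ofPred_eq, abs_le, Set.mem_Icc, eq_iff_iff]
    constructor
    · rintro ⟨_, _, h, h'⟩; constructor <;> linarith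
    · rintro ⟨h, h'⟩; exact ⟨hy.1, hy.2, by linarith, by linarith⟩
  · rw [Set.indicator_of_notMem hy]
    have : ∀ x, faceTri.indicator f (x, y) = 0 := by
      intro x
      apply Set.indicator_of_notMem
      rintro ⟨h, h', _⟩
      exact hy ⟨h, h'⟩
    simp [this]

open Polynomial in
theorem aux_mono (A B : ℝ[X]) (i a b : ℕ) :
    IntegrableOn (fun p : ℝ × ℝ => A.eval (p.1 / (1 - p.2)) * (1 - p.2) ^ i
      * B.eval (2 * p.2 - 1) * (p.1 ^ a * p.2 ^ b)) faceTri ∧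
    ∃ c : ℝ, ∫ p in faceTri, A.eval (p.1 / (1 - p.2)) * (1 - p.2) ^ i
      * B.eval (2 * p.2 - 1) * (p.1 ^ a * p.2 ^ b) =
      c * (∫ x in (-1:ℝ)..1, (A * X ^ a).eval x) *
        ∫ x in (-1:ℝ)..1, ((1 - X) ^ (1 + i + a) * B * (1 + X) ^ b).eval x := by
  have hI : IntegrableOn (fun p : ℝ × ℝ => A.eval (p.1 / (1 - p.2)) * (1 - p.2) ^ i
      * B.eval (2 * p.2 - 1) * (p.1 ^ a * p.2 ^ b)) faceTri := by
    have h1 : IntegrableOn (fun p : ℝ × ℝ => (1 - p.2) ^ i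
      * B.eval (2 * p.2 - 1) * (p.1 ^ a * p.2 ^ b)) faceTri := by
      apply ContinuousOn.integrableOn_compact aux_tri_compact
      have := B.continuous
      fun_prop
    obtain ⟨c, hc⟩ := (isCompact_Icc (a := (-1:ℝ)) (b := 1)).exists_bound_of_continuousOn
      A.continuous.continuousOn
    have h2 := Integrable.bdd_mul (c := c) (f := fun p : ℝ × ℝ => A.eval (p.1 / (1 - p.2))) h1
      (by
        apply Measurable.aestronglyMeasurable
        exact A.continuous.measurable.comp (by fun_prop))
      (by
        refine (ae_restrict_iff' aux_tri_compact.measurableSet).2 (Filter.Eventually.of_forall ?_)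
        rintro ⟨x, y⟩ ⟨_, h1, h2⟩
        apply hc
        simp only at h1 h2 ⊢
        rw [Set.mem_Icc, ← abs_le, abs_div, abs_of_nonneg (by linarith : 0 ≤ 1 - y)]
        exact div_le_one_of_le₀ h2 (by linarith))
    refine Integrable.congr h2 (Filter.Eventually.of_forall fun p => ?_)
    simp only
    ring
  refine ⟨hI, 2⁻¹ * (1/2) ^ (1 + i + a) * (1 / 2) ^ b, ?_⟩
  rw [aux_fubini _ hI]
  set K := ∫ x in (-1:ℝ)..1, (A * X ^ a).eval x with hK
  have hinner : ∀ y : ℝ, ((1 - y) * ∫ u in (-1:ℝ)..1, A.eval ((1 - y) * u / (1 - y)) * (1 - y) ^ i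
      * B.eval (2 * y - 1) * (((1 - y) * u) ^ a * y ^ b))
      = (fun t : ℝ => K * ((1/2) ^ (1 + i + a) * (1 / 2) ^ b) *
        ((1 - X) ^ (1 + i + a) * B * (1 + X) ^ b).eval t) (2 * y - 1) := by
    intro y
    have e2 : (1 - (2 * y - 1)) = 2 * (1 - y) := by ring
    have e3 : (1 + (2 * y - 1)) = 2 * y := by ring
    simp only [eval_mul, eval_pow, eval_add, eval_sub, eval_one, eval_X]
    rw [e2, e3]
    by_cases hy : 1 - y = 0
    · rw [hy]; simp
    have e1 : ∀ u : ℝ, A.eval ((1 - y) * u / (1 - y)) * (1 - y) ^ i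
      * B.eval (2 * y - 1) * (((1 - y) * u) ^ a * y ^ b) =
      ((1 - y) ^ i * B.eval (2 * y - 1) * (1 - y) ^ a * y ^ b) * (A * X ^ a).eval u := by
      intro u
      rw [mul_div_cancel_left₀ _ hy]
      simp only [eval_mul, eval_pow, eval_X, mul_pow]
      ring
    simp only [e1]
    rw [intervalIntegral.integral_const_mul, ← hK]
    simp only [mul_pow, one_div, inv_pow]
    field_simp
    ring
  simp only [hinner]
  have hsub := intervalIntegral.integral_comp_mul_sub (a := 0) (b := 1) (c := (2 : ℝ))
    (fun t : ℝ => ((1 - X) ^ (1 + i + a) * B * (1 + X) ^ b).eval t) two_ne_zero 1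
  rw [intervalIntegral.integral_const_mul, hsub, smul_eq_mul]
  norm_num
  ring

open Polynomial in
theorem aux_main (A B : ℝ[X]) (i k : ℕ) (hk : 1 ≤ k) (f : ℝ × ℝ → ℝ)
    (hf : ∀ p : ℝ × ℝ, p.2 ≠ 1 →
      f p = A.eval (p.1 / (1 - p.2)) * (1 - p.2) ^ i * B.eval (2 * p.2 - 1))
    (h0 : ∀ a b : ℕ, a + b < k → (∫ x in (-1:ℝ)..1, (A * X ^ a).eval x) = 0 ∨
        ∫ x in (-1:ℝ)..1, ((1 - X) ^ (1 + i + a) * B * (1 + X) ^ b).eval x = 0)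
    (q : MvPolynomial (Fin 2) ℝ) (hq : q.totalDegree ≤ k - 1) :
    ∫ p in faceTri, f p * MvPolynomial.eval ![p.1, p.2] q = 0 := by
  have hae : ∀ᵐ p : ℝ × ℝ, p.2 ≠ 1 := by
    have : ∀ᵐ x : ℝ, x ≠ 1 := by simp [ae_iff]
    rw [Measure.volume_eq_prod]
    exact Measure.quasiMeasurePreserving_snd.ae this
  have e : ∫ p in faceTri, f p * MvPolynomial.eval ![p.1, p.2] q =
      ∫ p in faceTri, ∑ d ∈ q.support, q.coeff d * (A.eval (p.1 / (1 - p.2)) * (1 - p.2) ^ i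
      * B.eval (2 * p.2 - 1) * (p.1 ^ (d 0) * p.2 ^ (d 1))) := by
    apply integral_congr_ae
    filter_upwards [ae_restrict_of_ae hae] with p hp
    rw [hf p hp, MvPolynomial.eval_eq', Finset.mul_sum]
    apply Finset.sum_congr rfl
    intro d _
    simp only [Fin.prod_univ_two, Matrix.cons_val_zero, Matrix.cons_val_one]
    ring
  rw [e, integral_finsetSum _ fun d _ => ((aux_mono A B i (d 0) (d 1)).1.const_mul _)]
  apply Finset.sum_eq_zero
  intro d hd
  obtain ⟨c, hc⟩ := (aux_mono A B i (d 0) (d 1)).2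
  rw [integral_const_mul, hc]
  have hdeg := MvPolynomial.le_totalDegree hd
  rw [Finsupp.sum_fintype _ _ (by simp), Fin.sum_univ_two] at hdeg
  rcases h0 (d 0) (d 1) (by omega) with h | h <;> rw [h] <;> simp

open Polynomial in
theorem aux_deg (m b n : ℕ) (h : m + b < n) :
    Polynomial.degree ((1 - X : ℝ[X]) ^ m * (1 + X) ^ b) < ((n : ℕ) : WithBot ℕ) := by
  refine lt_of_le_of_lt (b := ((m + b : ℕ) : WithBot ℕ)) ?_ (by exact_mod_cast h)
  rw [← Polynomial.natDegree_le_iff_degree_le]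
  compute_degree

/-- The normal-trace functions of total order exactly `k` are `L²(F)`-orthogonal to
all polynomials of total degree at most `k - 1`. -/
theorem top_order_traces_orthogonal (k i j : ℕ) (hk : 1 ≤ k) (hi : 1 ≤ i)
    (hij : i + j = k) (q : MvPolynomial (Fin 2) ℝ) (hq : q.totalDegree ≤ k - 1) :
    (∫ p in faceTri, gFun i j p * MvPolynomial.eval ![p.1, p.2] q = 0) ∧
      (∫ p in faceTri, hFun k p.2 * MvPolynomial.eval ![p.1, p.2] q = 0) := by
  constructor
  · obtain ⟨A, hA, hAo⟩ := aux_jacobi 0 i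
    obtain ⟨B, hB, hBo⟩ := aux_jacobi (2 * i + 1) j
    refine aux_main A B i k hk (gFun i j) ?_ ?_ q hq
    · intro p hp
      unfold gFun
      have h1 := hA (p.1 / (1 - p.2)) (by simp)
      have h2 := hB (2 * p.2 - 1) (pow_ne_zero _ (fun h => hp (by linarith)))
      push_cast at h1 h2
      rw [h1, h2]
    · intro a b hab
      by_cases ha : a < i
      · left
        have := hAo (Polynomial.X ^ a) (by
          rw [Polynomial.degree_X_pow]; exact_mod_cast ha)
        simpa using this
      · right
        push Not at ha
        obtain ⟨m, rfl⟩ := Nat.exists_eq_add_of_le ha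
        have := hBo _ (aux_deg m b j (by omega))
        rw [← this]
        congr 1
        funext x
        congr 1
        ring
  · obtain ⟨H, hH, hHo⟩ := aux_h k hk
    refine aux_main 1 H 0 k hk (fun p => hFun k p.2) ?_ ?_ q hq
    · intro p hp
      simp [hH p.2 hp]
    · intro a b hab
      right
      rw [← hHo _ (aux_deg a b k hab)]
      congr 1
      funext x
      congr 1
      ring
end
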